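/- Let n ∈ ℕ and let λ : (Fin n → Fin 4) → ℝ satisfy λ(a) > 0 for all a and λ(0) = 1, where 0 denotes the all-identity string. Then there exists r : (Fin n → Fin 4) → ℝ with r(0) = 0 such that for every a, λ(a) = Π_{b ◁ a, b ≠ 0} exp(−r(b)). -/

import Mathlib

/-!
Taking logarithms turns the product into the linear system `∑ r b = -log (lam a)`, the sum being
over nonzero `b ◁ a`. Since `b ◁ a` with `b ≠ a` forces `b` to have strictly smaller weight
(`pauliWeight_lt`), the system is unitriangular for the majorization order and is solved by
recursion on the weight (`pauliRate`). At `a = 0` the sum is empty, and `lam 0 = 1` gives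
`r 0 = 0`.
-/

/-- `b` is majorized by `a` (`b ◁ a`): on the support of `b`, `a` agrees with `b`. -/
def pauliMaj {n : ℕ} (b a : Fin n → Fin 4) : Prop :=
  ∀ i, b i ≠ 0 → a i = b i

instance {n : ℕ} (b a : Fin n → Fin 4) : Decidable (pauliMaj b a) :=
  inferInstanceAs (Decidable (∀ i, b i ≠ 0 → a i = b i))

/-- The number of non-identity factors of a Pauli string. -/
def pauliWeight {n : ℕ} (a : Fin n → Fin 4) : ℕ :=
  (Finset.univ.filter (fun i => a i ≠ 0)).card

theorem pauliWeight_lt {n : ℕ} {b a : Fin n → Fin 4} (h : pauliMaj b a) (hne : b ≠ a) :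
    pauliWeight b < pauliWeight a := by
  obtain ⟨i, hi⟩ := Function.ne_iff.mp hne
  -- Majorization forces `b` to vanish wherever it differs from `a`.
  have hbi : b i = 0 := by
    by_contra h0
    exact hi (h i h0).symm
  apply Finset.card_lt_card
  rw [Finset.ssubset_iff_of_subset]
  · refine ⟨i, ?_, ?_⟩
    · simpa [hbi, eq_comm] using hi
    · simp [hbi]
  · intro j hj
    simp only [Finset.mem_filter, Finset.mem_univ, true_and] at hj ⊢
    rwa [h j hj]

/-- The rates `r` solving `∑_{b ◁ a, b ≠ 0} r b = -log (lam a)` for `a ≠ 0`, by recursion on weight: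
the diagonal term `r a` is what remains after subtracting the strictly majorized terms. -/
noncomputable def pauliRate {n : ℕ} (lam : (Fin n → Fin 4) → ℝ) (a : Fin n → Fin 4) : ℝ :=
  -Real.log (lam a) -
    ∑ b : Fin n → Fin 4, if _h : pauliMaj b a ∧ b ≠ 0 ∧ b ≠ a then pauliRate lam b else 0
termination_by pauliWeight a
decreasing_by exact pauliWeight_lt _h.1 _h.2.2

theorem pauliRate_eq {n : ℕ} (lam : (Fin n → Fin 4) → ℝ) (a : Fin n → Fin 4) :
    pauliRate lam a = -Real.log (lam a) -
      ∑ b ∈ Finset.univ.filter (fun b => pauliMaj b a ∧ b ≠ 0 ∧ b ≠ a), pauliRate lam b := by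
  rw [pauliRate, Finset.sum_filter]
  simp only [dite_eq_ite]

theorem eq_zero_of_pauliMaj_zero {n : ℕ} {b : Fin n → Fin 4} (h : pauliMaj b 0) : b = 0 := by
  funext i
  by_contra h0
  exact h0 (h i h0).symm

theorem pauliRate_zero {n : ℕ} (lam : (Fin n → Fin 4) → ℝ) (hid : lam 0 = 1) :
    pauliRate lam 0 = 0 := by
  rw [pauliRate_eq, hid, Finset.filter_false_of_mem]
  · simp
  · rintro b - ⟨hb, hb0, -⟩
    exact hb0 (eq_zero_of_pauliMaj_zero hb)

theorem sum_pauliRate {n : ℕ} (lam : (Fin n → Fin 4) → ℝ) (hid : lam 0 = 1)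
    (a : Fin n → Fin 4) :
    ∑ b ∈ Finset.univ.filter (fun b => pauliMaj b a ∧ b ≠ 0), pauliRate lam b
      = -Real.log (lam a) := by
  by_cases ha : a = 0
  · subst ha
    rw [Finset.filter_false_of_mem]
    · simp [hid]
    · rintro b - ⟨hb, hb0⟩
      exact hb0 (eq_zero_of_pauliMaj_zero hb)
  · have hmem : a ∈ Finset.univ.filter (fun b => pauliMaj b a ∧ b ≠ 0) := by
      simp only [Finset.mem_filter, Finset.mem_univ, true_and]
      exact ⟨fun _ _ => rfl, ha⟩
    have herase : (Finset.univ.filter (fun b => pauliMaj b a ∧ b ≠ 0)).erase a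
        = Finset.univ.filter (fun b => pauliMaj b a ∧ b ≠ 0 ∧ b ≠ a) := by
      ext b
      simp only [Finset.mem_erase, Finset.mem_filter, Finset.mem_univ, true_and]
      tauto
    rw [← Finset.add_sum_erase _ _ hmem, herase, pauliRate_eq lam a]
    ring

/-- Every Pauli channel with strictly positive Pauli eigenvalues `λ` (normalized so
that `λ` at the identity is `1`) is quasi-local with respect to the full factor set:
its eigenvalues factorize as `λ a = Π_{b ◁ a, b ≠ 0} exp(−r b)`. -/
theorem pauli_channel_full_factorization (n : ℕ) (lam : (Fin n → Fin 4) → ℝ)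
    (hpos : ∀ a, 0 < lam a) (hid : lam 0 = 1) :
    ∃ r : (Fin n → Fin 4) → ℝ, r 0 = 0 ∧
      ∀ a, lam a = ∏ b ∈ Finset.univ.filter (fun b => pauliMaj b a ∧ b ≠ 0),
        Real.exp (-(r b)) := by
  refine ⟨pauliRate lam, pauliRate_zero lam hid, fun a => ?_⟩
  rw [← Real.exp_sum, Finset.sum_neg_distrib, sum_pauliRate lam hid, neg_neg,
    Real.exp_log (hpos a)]
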